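/- arXiv:2311.15409 — 2 statements merged into one kernel-verified Lean document; each statement's English description precedes it below -/
import Mathlib

section
/- For any algebraically closed field F of characteristic 2, SL₂(F) is a commutative transitive (CT) group: for every non-identity g ∈ SL₂(F), the centralizer of g in SL₂(F) is abelian. -/
open Matrix

/-!
A matrix `B` commuting with a non-scalar `2 × 2` matrix `A` over a domain is, up to a nonzero
scalar factor, a polynomial in `A`; hence any matrix commuting with `A` also commutes with `B`.
So the centralizer of a non-central element of `SL₂` is abelian. The center consists of the scalars
`r` with `r ^ 2 = 1`, and in characteristic two squaring is injective, so the center is trivial.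
-/

lemma mem_range_scalar_fin_two_iff {R : Type*} [Semiring R] {A : Matrix (Fin 2) (Fin 2) R} :
    A ∈ Set.range (scalar (Fin 2)) ↔ A 0 1 = 0 ∧ A 1 0 = 0 ∧ A 0 0 = A 1 1 := by
  refine ⟨?_, fun ⟨h01, h10, hdiag⟩ ↦ ⟨A 0 0, ?_⟩⟩
  · rintro ⟨r, rfl⟩
    simp
  · ext i j
    fin_cases i <;> fin_cases j <;> simp [h01, h10, hdiag]

lemma exists_smul_sub_smul_mem_range_scalar_of_commute {R : Type*} [CommRing R]
    {A B : Matrix (Fin 2) (Fin 2) R} (hA : A ∉ Set.range (scalar (Fin 2))) (hAB : Commute A B) :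
    ∃ r s : R, r ≠ 0 ∧ r • B - s • A ∈ Set.range (scalar (Fin 2)) := by
  have entry (i j : Fin 2) : A i 0 * B 0 j + A i 1 * B 1 j = B i 0 * A 0 j + B i 1 * A 1 j := by
    simpa only [mul_apply, Fin.sum_univ_two] using congr_fun₂ hAB.eq i j
  simp only [mem_range_scalar_fin_two_iff, Matrix.sub_apply, Matrix.smul_apply, smul_eq_mul]
    at hA ⊢
  by_cases h01 : A 0 1 = 0
  · by_cases h10 : A 1 0 = 0
    · have hdiag : A 0 0 - A 1 1 ≠ 0 := fun h ↦ hA ⟨h01, h10, sub_eq_zero.mp h⟩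
      refine ⟨A 0 0 - A 1 1, B 0 0 - B 1 1, hdiag, ?_, ?_, ?_⟩
      · linear_combination entry 0 1
      · linear_combination -entry 1 0
      · ring
    · refine ⟨A 1 0, B 1 0, h10, ?_, ?_, ?_⟩
      · linear_combination -entry 0 0
      · ring
      · linear_combination entry 1 0
  · refine ⟨A 0 1, B 0 1, h01, ?_, ?_, ?_⟩
    · ring
    · linear_combination entry 0 0
    · linear_combination -entry 0 1

lemma commute_of_commute_of_notMem_range_scalar {R : Type*} [CommRing R] [NoZeroDivisors R]
    {A B C : Matrix (Fin 2) (Fin 2) R} (hA : A ∉ Set.range (scalar (Fin 2)))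
    (hAB : Commute A B) (hAC : Commute A C) : Commute B C := by
  obtain ⟨r, s, hr, t, ht⟩ := exists_smul_sub_smul_mem_range_scalar_of_commute hA hAB
  have hrB : Commute (r • B) C := by
    rw [← sub_add_cancel (r • B) (s • A), ← ht]
    exact (scalar_commute t (Commute.all t) C).add_left (hAC.smul_left s)
  refine smul_right_injective _ hr ?_
  simpa only [smul_mul_assoc, mul_smul_comm] using hrB.eq

lemma isMulCommutative_centralizer_singleton_of_notMem_center {R : Type*} [CommRing R]
    [NoZeroDivisors R] {g : SpecialLinearGroup (Fin 2) R}
    (hg : g ∉ Subgroup.center (SpecialLinearGroup (Fin 2) R)) :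
    IsMulCommutative (Subgroup.centralizer {g}) := by
  have not_scalar : (g : Matrix (Fin 2) (Fin 2) R) ∉ Set.range (scalar (Fin 2)) := by
    rintro ⟨r, hr⟩
    refine hg (Matrix.SpecialLinearGroup.mem_center_iff.mpr ⟨r, ?_, hr⟩)
    simpa [← hr] using g.det_coe
  have commute_coe {a : SpecialLinearGroup (Fin 2) R} (ha : a ∈ Subgroup.centralizer {g}) :
      Commute (g : Matrix (Fin 2) (Fin 2) R) a :=
    congrArg Subtype.val (Subgroup.mem_centralizer_iff.mp ha g rfl)
  exact ⟨⟨fun a b ↦ Subtype.ext <| Subtype.ext <|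
    (commute_of_commute_of_notMem_range_scalar not_scalar
      (commute_coe a.2) (commute_coe b.2)).eq⟩⟩

lemma center_specialLinearGroup_eq_bot_of_card_eq_expChar_pow {n R : Type*} [Fintype n]
    [DecidableEq n] [CommRing R] [IsReduced R] (p k : ℕ) [ExpChar R p]
    (hn : Fintype.card n = p ^ k) : Subgroup.center (SpecialLinearGroup n R) = ⊥ := by
  refine (Subgroup.eq_bot_iff_forall _).mpr fun g hg ↦ ?_
  obtain ⟨r, hr, hrg⟩ := Matrix.SpecialLinearGroup.mem_center_iff.mp hg
  have r_eq_one : r = 1 := by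
    rw [hn, ← mul_one (p ^ k), ExpChar.pow_prime_pow_mul_eq_one_iff, pow_one] at hr
    exact hr
  exact Subtype.ext (by simp [← hrg, r_eq_one])

theorem sl2_char_two_commutative_transitive_general {R : Type*} [CommRing R] [NoZeroDivisors R]
    [CharP R 2] {g : SpecialLinearGroup (Fin 2) R} (hg : g ≠ 1) :
    IsMulCommutative (Subgroup.centralizer {g}) := by
  have center_eq_bot : Subgroup.center (SpecialLinearGroup (Fin 2) R) = ⊥ :=
    center_specialLinearGroup_eq_bot_of_card_eq_expChar_pow 2 1 (by simp)
  apply isMulCommutative_centralizer_singleton_of_notMem_center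
  rwa [center_eq_bot, Subgroup.mem_bot]

/-- For any algebraically closed field `F` of characteristic 2, `SL₂(F)` is a
commutative transitive (CT) group: the centralizer of every non-identity element
is abelian. -/
theorem sl2_char_two_commutative_transitive
    (F : Type*) [Field F] [IsAlgClosed F] [CharP F 2]
    (g : SpecialLinearGroup (Fin 2) F) (hg : g ≠ 1) :
    ∀ a ∈ Subgroup.centralizer {g}, ∀ b ∈ Subgroup.centralizer {g}, a * b = b * a :=
  have := sl2_char_two_commutative_transitive_general hg
  fun _ ha _ hb ↦ setLike_mul_comm ha hb
end

section
/- A group G is uniformly inner amenable if and only if every group H elementarily equivalent to G is inner amenable. Moreover, these are equivalent to every ultrapower of G being inner amenable. -/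
open FirstOrder

/-- The first-order language of groups: one constant (identity), one unary
function (inverse), one binary function (multiplication), no relations. -/
def grpLang : FirstOrder.Language :=
  ⟨fun n => match n with
    | 0 => Unit
    | 1 => Unit
    | 2 => Unit
    | _ => Empty,
   fun _ => Empty⟩

/-- Every group is a structure for the language of groups in the natural way. -/
instance grpStructure (G : Type*) [Group G] : grpLang.Structure G where
  funMap {n} f v :=
    match n, f with
    | 0, _ => 1
    | 1, _ => (v 0)⁻¹
    | 2, _ => v 0 * v 1
  RelMap {n} r := Empty.elim r

/-- `T` is an `(S, ε)`-conjugation-Følner set: `|gTg⁻¹ △ T| < ε|T|` for all `g ∈ S`. -/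
def IsCFolner {G : Type*} [Group G] (S : Finset G) (ε : ℝ) (T : Finset G) : Prop :=
  letI := Classical.decEq G
  ∀ g ∈ S, (((symmDiff (T.image fun x => g * x * g⁻¹) T).card : ℝ)) < ε * T.card

/-- `G` is inner amenable (Følner formulation): for every finite `S ⊆ G`, every
`ε > 0` and every `n`, there is a nonempty finite `(S, ε)`-conjugation-Følner
set of cardinality at least `n`. -/
def FolnerInnerAmenable (G : Type*) [Group G] : Prop :=
  ∀ (S : Finset G) (ε : ℝ), 0 < ε → ∀ n : ℕ,
    ∃ T : Finset G, T.Nonempty ∧ n ≤ T.card ∧ IsCFolner S ε T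

/-- `G` is uniformly inner amenable: there is `f : ℕ → ℕ` such that for every
`n` and every finite `S ⊆ G` with `|S| ≤ n` there is a finite `T ⊆ G` with
`n ≤ |T| ≤ f n` which is an `(S, 1/n)`-conjugation-Følner set. -/
def UniformlyInnerAmenable (G : Type*) [Group G] : Prop :=
  ∃ f : ℕ → ℕ, ∀ (n : ℕ) (S : Finset G), S.card ≤ n →
    ∃ T : Finset G, n ≤ T.card ∧ T.card ≤ f n ∧ IsCFolner S (1 / (n : ℝ)) T

/-!
Both notions ask for Følner sets of a finite tuple `x`. Fix the tolerance `1 / n` and a lower bound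
on the size: inner amenability then says `∀ x, ∃ m, ...`, where `m` bounds the size of the Følner
set, and uniform inner amenability says `∃ m, ∀ x, ...`. For fixed `m` the remaining condition is
first-order in `x` and monotone in `m`. Hence uniform inner amenability is elementary, and an
ultrapower along indices tending to infinity, where tuples failing for larger and larger `m` combine
into one tuple failing for all `m`, exchanges the quantifiers. The downward Löwenheim–Skolem theorem
replaces this ultrapower by countable elementary subgroups, which live in every universe.
-/

open Filter FirstOrder.Language

universe w

theorem hyperfilter_ne_pure {I : Type*} [Infinite I] (i : I) : hyperfilter I ≠ pure i := by
  intro h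
  exact notMem_hyperfilter_of_finite (Set.finite_singleton i) (h ▸ Set.mem_singleton i)

theorem tendsto_down_hyperfilter :
    Tendsto ULift.down (hyperfilter (ULift.{w} ℕ) : Filter (ULift.{w} ℕ)) atTop :=
  Nat.cofinite_eq_atTop ▸ ULift.down_injective.tendsto_cofinite.mono_left hyperfilter_le_cofinite

section ModelTheory

variable {L : Language} {M N : Type*} [L.Structure M] [L.Structure N]

theorem realize_iAlls_relabel_inr {α : Type*} [Finite α] (φ : L.Formula α) :
    M ⊨ (Formula.iAlls α (φ.relabel Sum.inr) : L.Sentence) ↔ ∀ x : α → M, φ.Realize x := by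
  simp only [Sentence.Realize, Formula.realize_iAlls, Formula.realize_relabel, Function.comp_def,
    Sum.elim_inr]

theorem forall_realize_iff_of_elementarilyEquivalent {α : Type*} [Finite α] (e : M ≅[L] N)
    (φ : L.Formula α) : (∀ x : α → M, φ.Realize x) ↔ ∀ x : α → N, φ.Realize x := by
  rw [← realize_iAlls_relabel_inr, ← realize_iAlls_relabel_inr]
  exact elementarilyEquivalent_iff.1 e _

theorem exists_forall_realize_of_ultrapower [Nonempty M] {α I : Type*} {u : Ultrafilter I}
    {r : I → ℕ} (hr : Tendsto r u atTop) {φ : ℕ → L.Formula α}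
    (φ_mono : ∀ x : α → M, Monotone fun m => (φ m).Realize x)
    (h : ∀ x : α → (u : Filter I).Product fun _ => M, ∃ m, (φ m).Realize x) :
    ∃ m, ∀ x : α → M, (φ m).Realize x := by
  by_contra! hfail
  choose x hx using hfail
  obtain ⟨m, hm⟩ := h fun a => ((fun i => x (r i) a : I → M) : (u : Filter I).Product fun _ => M)
  have hlos : ∀ᶠ i in u, (φ m).Realize (x (r i)) :=
    (Ultraproduct.realize_formula_cast (φ m) fun a i => x (r i) a).1 hm
  obtain ⟨i, hi, hmi⟩ := (hlos.and (hr.eventually_ge_atTop m)).exists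
  exact hx (r i) (φ_mono _ hmi hi)

theorem exists_countable_elementarySubstructure [Countable L.Symbols] [Nonempty M] {s : Set M}
    (hs : s.Countable) : ∃ S : L.ElementarySubstructure M, s ⊆ S ∧ Countable S := by
  have : Countable (Σ n, (L.sum L.skolem₁).Functions n) :=
    Cardinal.mk_le_aleph0_iff.1 <|
      card_functions_sum_skolem₁_le.trans (max_le le_rfl Cardinal.mk_le_aleph0)
  exact ⟨(Substructure.closure (L.sum L.skolem₁) s).elementarySkolem₁Reduct,
    Substructure.subset_closure, hs.substructure_closure _⟩

end ModelTheory

section LanguageOfGroups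

variable {G H : Type*} [Group G] [Group H]

instance : Countable grpLang.Symbols := by
  have (n : ℕ) : Countable (grpLang.Functions n) :=
    match n with
    | 0 | 1 | 2 => inferInstanceAs (Countable Unit)
    | _ + 3 => inferInstanceAs (Countable Empty)
  have (n : ℕ) : Countable (grpLang.Relations n) := inferInstanceAs (Countable Empty)
  infer_instance

/-- The product of two terms in the language of groups. -/
def mulTerm {α : Type*} (s t : grpLang.Term α) : grpLang.Term α :=
  Functions.apply₂ (() : grpLang.Functions 2) s t

theorem realize_mulTerm {α : Type*} (s t : grpLang.Term α) (x : α → G) :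
    (mulTerm s t).realize x = s.realize x * t.realize x :=
  Term.realize_functions_apply₂

/-- A group isomorphism as an isomorphism of structures for the language of groups. -/
def grpLangEquivOfMulEquiv (e : G ≃* H) : G ≃[grpLang] H where
  toEquiv := e.toEquiv
  map_fun' {n} f _ :=
    match n, f with
    | 0, _ => map_one e
    | 1, _ => map_inv e _
    | 2, _ => map_mul e _ _
  map_rel' r := Empty.elim r

/-- The subgroup underlying an elementary substructure of a group. -/
def subgroupOfElementarySubstructure (S : grpLang.ElementarySubstructure G) : Subgroup G where
  carrier := S
  mul_mem' {a b} ha hb :=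
    S.toSubstructure.fun_mem (n := 2) () ![a, b] (Fin.forall_fin_two.2 ⟨ha, hb⟩)
  one_mem' := S.toSubstructure.fun_mem (n := 0) () ![] (Fin.forall_fin_zero.2 trivial)
  inv_mem' {a} ha := S.toSubstructure.fun_mem (n := 1) () ![a] (Fin.forall_fin_one.2 ha)

/-- An elementary substructure of a group carries two structures for the language of groups, the
induced one and that of the underlying subgroup; the identity is an isomorphism between them. -/
def subgroupEquivElementarySubstructure (S : grpLang.ElementarySubstructure G) :
    subgroupOfElementarySubstructure S ≃[grpLang] S where
  toEquiv := Equiv.refl _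
  map_fun' {n} f _ :=
    match n, f with
    | 0, _ | 1, _ | 2, _ => rfl
  map_rel' r := Empty.elim r

theorem exists_elementaryEmbedding_small_group (G : Type*) [Group G] {s : Set G}
    (hs : s.Countable) :
    ∃ (H : Type w) (_ : Group H) (f : H ↪ₑ[grpLang] G), s ⊆ Set.range f := by
  obtain ⟨S, hsS, hS⟩ := exists_countable_elementarySubstructure (L := grpLang) hs
  have : Countable (subgroupOfElementarySubstructure S) := hS
  let e : Shrink.{w} (subgroupOfElementarySubstructure S) ≃[grpLang] S :=
    (subgroupEquivElementarySubstructure S).comp (grpLangEquivOfMulEquiv Shrink.mulEquiv)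
  refine ⟨_, inferInstance, S.subtype.comp e.toElementaryEmbedding, fun g hg => ?_⟩
  exact ⟨e.symm ⟨g, hsS hg⟩, congrArg Subtype.val (e.apply_symm_apply ⟨g, hsS hg⟩)⟩

/-- The model-theoretic ultrapower of a group is its group of germs. -/
noncomputable def productEquivGerm {I : Type*} (u : Ultrafilter I) (G : Type*) [Group G] :
    ((u : Filter I).Product fun _ => G) ≃[grpLang] (u : Filter I).Germ G where
  toEquiv := Equiv.refl _
  map_fun' {n} f x := by
    obtain ⟨x, rfl⟩ : ∃ y : Fin n → I → G,
        (fun i => (y i : (u : Filter I).Product fun _ => G)) = x :=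
      ⟨fun i => (x i).out, funext fun i => Quotient.out_eq (x i)⟩
    refine (Ultraproduct.funMap_cast (u := u) (M := fun _ => G) f x).trans ?_
    match n, f with
    | 0, _ | 1, _ | 2, _ => rfl
  map_rel' r := Empty.elim r

theorem elementarilyEquivalent_germ {I : Type*} (u : Ultrafilter I) (G : Type*) [Group G] :
    G ≅[grpLang] (u : Filter I).Germ G := by
  have los : G ≅[grpLang] ((u : Filter I).Product fun _ => G) :=
    elementarilyEquivalent_iff.2 fun φ => by rw [Ultraproduct.sentence_realize, eventually_const]
  exact los.trans (StrongHomClass.elementarilyEquivalent (productEquivGerm u G))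

end LanguageOfGroups

section Folner

variable {G : Type*} [Group G]

theorem card_symmDiff_image_of_injective {α : Type*} [DecidableEq α] (T : Finset α) {φ : α → α}
    (hφ : φ.Injective) : (symmDiff (T.image φ) T).card = 2 * (T.filter (φ · ∉ T)).card := by
  have hcard : (T.image φ).card = T.card := Finset.card_image_of_injective T hφ
  have hdiff : (T.image φ \ T).card = (T.filter (φ · ∉ T)).card := by
    rw [← Finset.filter_notMem_eq_sdiff, Finset.filter_image, Finset.card_image_of_injective _ hφ]
  rw [symmDiff_def, Finset.sup_eq_union, Finset.card_union_of_disjoint disjoint_sdiff_sdiff,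
    ← Finset.card_sdiff_comm hcard, hdiff, two_mul]

open Classical in
theorem isCFolner_one_div_iff {n : ℕ} (hn : n ≠ 0) {S T : Finset G} :
    IsCFolner S (1 / (n : ℝ)) T ↔
      ∀ g ∈ S, n * (2 * (T.filter (g * · * g⁻¹ ∉ T)).card) < T.card := by
  have hn : (0 : ℝ) < n := by positivity
  refine forall₂_congr fun g _ => ?_
  have hcard : (symmDiff (T.image (g * · * g⁻¹)) T).card = 2 * (T.filter (g * · * g⁻¹ ∉ T)).card :=
    card_symmDiff_image_of_injective T (MulAut.conj g).injective
  rw [one_div_mul_eq_div, lt_div_iff₀' hn, ← hcard]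
  norm_cast

theorem IsCFolner.mono {S S' T : Finset G} {ε ε' : ℝ} (h : IsCFolner S ε T) (hS : S' ⊆ S)
    (hε : ε ≤ ε') : IsCFolner S' ε' T :=
  fun g hg => (h g (hS hg)).trans_le (by gcongr)

/-- The tuple `x` has a conjugation-Følner set with tolerance `1 / n` whose cardinality is
between `n` and `m`. For `n = 0` it is used with `ι = Fin 0` only, where the junk value of `1 / 0`
is harmless. -/
def HasCFolner {ι : Type*} (n m : ℕ) (x : ι → G) : Prop :=
  ∃ T : Finset G, n ≤ T.card ∧ T.card ≤ m ∧ ∀ i, IsCFolner {x i} (1 / (n : ℝ)) T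

theorem HasCFolner.monotone {ι : Type*} (n : ℕ) (x : ι → G) : Monotone (HasCFolner n · x) :=
  fun _ _ hm ⟨T, hnT, hTm, hT⟩ => ⟨T, hnT, hTm.trans hm, hT⟩

theorem exists_tuple_of_card_le (S : Finset G) {n : ℕ} (hS : S.card ≤ n) :
    ∃ x : Fin n → G, ∀ g ∈ S, ∃ i, x i = g := by
  obtain ⟨e⟩ : Nonempty (S ↪ Fin n) := Function.Embedding.nonempty_of_card_le (by simpa using hS)
  exact ⟨Function.extend e Subtype.val 1,
    fun g hg => ⟨e ⟨g, hg⟩, e.injective.extend_apply _ _ ⟨g, hg⟩⟩⟩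

theorem isCFolner_of_forall_singleton {ι : Type*} {x : ι → G} {S T : Finset G} {ε : ℝ}
    (hS : ∀ g ∈ S, ∃ i, x i = g) (h : ∀ i, IsCFolner {x i} ε T) : IsCFolner S ε T := by
  intro g hg
  obtain ⟨i, rfl⟩ := hS g hg
  exact h i (x i) (Finset.mem_singleton_self _)

theorem uniformlyInnerAmenable_iff_exists_forall_hasCFolner :
    UniformlyInnerAmenable G ↔ ∀ n, ∃ m, ∀ x : Fin n → G, HasCFolner n m x := by
  classical
  constructor
  · rintro ⟨f, hf⟩ n
    refine ⟨f n, fun x => ?_⟩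
    obtain ⟨T, hnT, hTf, hT⟩ :=
      hf n (Finset.univ.image x) (Finset.card_image_le.trans (Finset.card_fin n).le)
    exact ⟨T, hnT, hTf, fun i => hT.mono (by simp) le_rfl⟩
  · intro h
    choose f hf using h
    refine ⟨f, fun n S hS => ?_⟩
    obtain ⟨x, hx⟩ := exists_tuple_of_card_le S hS
    obtain ⟨T, hnT, hTf, hT⟩ := hf n x
    exact ⟨T, hnT, hTf, isCFolner_of_forall_singleton hx hT⟩

theorem folnerInnerAmenable_iff_forall_exists_hasCFolner :
    FolnerInnerAmenable G ↔ ∀ n, ∀ x : Fin n → G, ∃ m, HasCFolner n m x := by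
  classical
  constructor
  · intro h n x
    obtain ⟨T, -, hnT, hT⟩ := h (Finset.univ.image x) (1 / (n + 1 : ℝ)) (by positivity) n
    refine ⟨T.card, T, hnT, le_rfl, fun i => hT.mono (by simp) ?_⟩
    exact one_div_le_one_div_of_le (Nat.cast_pos.2 i.pos) (by simp)
  · intro h S ε hε n
    obtain ⟨k, hk⟩ := exists_nat_one_div_lt hε
    let N := n + S.card + (k + 1)
    obtain ⟨x, hx⟩ := exists_tuple_of_card_le (n := N) S (by omega)
    obtain ⟨_, T, hNT, -, hT⟩ := h N x
    have hNε : 1 / (N : ℝ) ≤ ε :=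
      (one_div_le_one_div_of_le (by positivity) (by exact_mod_cast Nat.le_add_left _ _)).trans hk.le
    exact ⟨T, Finset.card_pos.1 (by omega), by omega,
      (isCFolner_of_forall_singleton hx hT).mono subset_rfl hNε⟩

theorem UniformlyInnerAmenable.folnerInnerAmenable (h : UniformlyInnerAmenable G) :
    FolnerInnerAmenable G := by
  rw [folnerInnerAmenable_iff_forall_exists_hasCFolner]
  intro n x
  obtain ⟨m, hm⟩ := uniformlyInnerAmenable_iff_exists_forall_hasCFolner.1 h n
  exact ⟨m, hm x⟩

end Folner

section FolnerFormula

variable {G H : Type*} [Group G] [Group H]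

theorem isCFolner_map_iff {ι : Type*} [Fintype ι] {n : ℕ} (hn : n ≠ 0) (g : G) (t : ι ↪ G) :
    IsCFolner {g} (1 / (n : ℝ)) (Finset.univ.map t) ↔
      ∃ A : Finset ι, n * (2 * A.card) < Fintype.card ι ∧
        ∀ j ∉ A, ∃ k, g * t j = t k * g := by
  classical
  have hmem (j : ι) : g * t j * g⁻¹ ∈ Finset.univ.map t ↔ ∃ k, g * t j = t k * g := by
    simp [eq_mul_inv_iff_mul_eq, eq_comm]
  rw [isCFolner_one_div_iff hn]
  simp only [Finset.mem_singleton, forall_eq, Finset.filter_map, Finset.card_map,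
    Function.comp_def, hmem, Finset.card_univ]
  refine ⟨fun h => ⟨_, h, by simp⟩, fun ⟨A, hA, hmoved⟩ => lt_of_le_of_lt ?_ hA⟩
  gcongr
  intro j hj
  by_contra hjA
  exact (Finset.mem_filter.1 hj).2 (hmoved j hjA)

theorem hasCFolner_iff_exists_embedding {ι : Type*} {n m : ℕ} {x : ι → G} :
    HasCFolner n m x ↔ ∃ c : Set.Icc n m, ∃ t : Fin c ↪ G,
      ∀ i, IsCFolner {x i} (1 / (n : ℝ)) (Finset.univ.map t) := by
  constructor
  · rintro ⟨T, hnT, hTm, hT⟩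
    let t : Fin T.card ↪ G := T.equivFin.symm.toEmbedding.trans (.subtype _)
    have map_t : Finset.univ.map t = T := by
      rw [← Finset.map_map, Finset.map_univ_equiv]
      exact Finset.attach_map_val
    exact ⟨⟨T.card, hnT, hTm⟩, t, map_t.symm ▸ hT⟩
  · rintro ⟨⟨c, hnc, hcm⟩, t, ht⟩
    exact ⟨Finset.univ.map t, by simpa, by simpa, ht⟩

/-- The formula saying that a tuple `x` satisfies `HasCFolner n m x`. It enumerates the Følner set
by an injective tuple `t`, whose entries outside the small set `A` stay in the Følner set under
conjugation by `x i`. The factor `2` is there because conjugation moves as many elements into the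
set as out of it. -/
noncomputable def cFolnerFormula (n m : ℕ) : grpLang.Formula (Fin n) :=
  Formula.iSup fun c : Set.Icc n m => Formula.iExs (Fin c) <|
    (Formula.iInf fun p : {p : Fin c × Fin c // p.1 ≠ p.2} =>
      (Term.equal (.var (.inr p.1.1)) (.var (.inr p.1.2))).not) ⊓
    Formula.iInf fun i : Fin n =>
      Formula.iSup fun A : {A : Finset (Fin c) // n * (2 * A.card) < c} =>
        Formula.iInf fun j : {j // j ∉ A.1} => Formula.iSup fun k : Fin c =>
          Term.equal (mulTerm (.var (.inl i)) (.var (.inr j.1)))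
            (mulTerm (.var (.inr k)) (.var (.inl i)))

theorem realize_cFolnerFormula {n m : ℕ} {x : Fin n → G} :
    (cFolnerFormula n m).Realize x ↔ HasCFolner n m x := by
  have hrealize : (cFolnerFormula n m).Realize x ↔ ∃ c : Set.Icc n m, ∃ t : Fin c → G,
      (∀ j k, j ≠ k → t j ≠ t k) ∧ ∀ i, ∃ A : Finset (Fin c), n * (2 * A.card) < c ∧
        ∀ j ∉ A, ∃ k, x i * t j = t k * x i := by
    simp only [cFolnerFormula, Formula.realize_iSup, Formula.realize_iExs, Formula.realize_inf,
      Formula.realize_iInf, Formula.realize_not, Formula.realize_equal, realize_mulTerm,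
      Term.realize_var, Sum.elim_inl, Sum.elim_inr, Subtype.forall, Subtype.exists, Prod.forall,
      exists_prop]
  rw [hrealize, hasCFolner_iff_exists_embedding]
  refine exists_congr fun c => ?_
  constructor
  · rintro ⟨t, ht, hx⟩
    have t_inj : t.Injective := fun j k => not_imp_not.1 (ht j k)
    exact ⟨⟨t, t_inj⟩, fun i => (isCFolner_map_iff i.pos.ne' _ _).2 (by simpa using hx i)⟩
  · rintro ⟨t, hx⟩
    exact ⟨t, fun _ _ => t.injective.ne,
      fun i => by simpa using (isCFolner_map_iff i.pos.ne' _ _).1 (hx i)⟩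

theorem UniformlyInnerAmenable.of_elementarilyEquivalent (h : UniformlyInnerAmenable G)
    (e : G ≅[grpLang] H) : UniformlyInnerAmenable H := by
  simp only [uniformlyInnerAmenable_iff_exists_forall_hasCFolner, ← realize_cFolnerFormula] at h ⊢
  exact fun n => (h n).imp fun m => (forall_realize_iff_of_elementarilyEquivalent e _).1

theorem uniformlyInnerAmenable_of_folnerInnerAmenable_germ {I : Type*} {u : Ultrafilter I}
    {r : I → ℕ} (hr : Tendsto r u atTop) (h : FolnerInnerAmenable ((u : Filter I).Germ G)) :
    UniformlyInnerAmenable G := by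
  simp only [uniformlyInnerAmenable_iff_exists_forall_hasCFolner,
    folnerInnerAmenable_iff_forall_exists_hasCFolner, ← realize_cFolnerFormula] at h ⊢
  intro n
  refine exists_forall_realize_of_ultrapower hr (fun x => ?_) fun x => ?_
  · simpa only [realize_cFolnerFormula] using HasCFolner.monotone n x
  · obtain ⟨m, hm⟩ := h n (productEquivGerm u G ∘ x)
    exact ⟨m, (StrongHomClass.realize_formula (productEquivGerm u G) _).1 hm⟩

theorem folnerInnerAmenable_of_forall_elementarilyEquivalent
    (h : ∀ (H : Type w) [Group H], G ≅[grpLang] H → FolnerInnerAmenable H) :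
    FolnerInnerAmenable G := by
  simp only [folnerInnerAmenable_iff_forall_exists_hasCFolner, ← realize_cFolnerFormula] at h ⊢
  intro n x
  obtain ⟨H, _, f, hf⟩ := exists_elementaryEmbedding_small_group.{w} G (Set.countable_range x)
  choose y hy using fun i => hf ⟨i, rfl⟩
  obtain rfl : f ∘ y = x := funext hy
  obtain ⟨m, hm⟩ := h H f.elementarilyEquivalent.symm n y
  exact ⟨m, (f.map_formula _ _).2 hm⟩

end FolnerFormula

/-- A group `G` is uniformly inner amenable iff every group elementarily
equivalent to `G` is inner amenable, iff every ultrapower of `G` with respect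
to a nonprincipal ultrafilter is inner amenable. -/
theorem uniformlyInnerAmenable_iff (G : Type*) [Group G] :
    (UniformlyInnerAmenable G ↔
      ∀ (H : Type*) [Group H], G ≅[grpLang] H → FolnerInnerAmenable H) ∧
    (UniformlyInnerAmenable G ↔
      ∀ (I : Type*) (u : Ultrafilter I), (∀ i : I, u ≠ pure i) →
        FolnerInnerAmenable ((u : Filter I).Germ G)) := by
  refine ⟨⟨fun h H _ e => ?_, fun h => ?_⟩, ⟨fun h I u _ => ?_, fun h => ?_⟩⟩
  · exact (h.of_elementarilyEquivalent e).folnerInnerAmenable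
  · apply uniformlyInnerAmenable_of_folnerInnerAmenable_germ tendsto_down_hyperfilter.{0}
    exact folnerInnerAmenable_of_forall_elementarilyEquivalent fun H _ e =>
      h H ((elementarilyEquivalent_germ _ G).trans e)
  · exact (h.of_elementarilyEquivalent (elementarilyEquivalent_germ u G)).folnerInnerAmenable
  · exact uniformlyInnerAmenable_of_folnerInnerAmenable_germ tendsto_down_hyperfilter
      (h _ (hyperfilter (ULift ℕ)) hyperfilter_ne_pure)
end
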